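/- Let P ⊂ ℝ^n be a full-dimensional lattice polytope such that the interior of the dilate n·P contains no point of ℤ^n (equivalently, cd(P) = n+1). Then P is unimodularly equivalent to the standard unimodular simplex Δ_n; that is, there exist U ∈ GL_n(ℤ) and w ∈ ℤ^n such that the affine map x ↦ Ux + w carries P onto Δ_n = conv(0, e_1, …, e_n). -/

import Mathlib

noncomputable section

open MeasureTheory Pointwise

/-- A point of `ℝ^n` is a lattice point if all its coordinates are integers. -/
def IsLatticePt {n : ℕ} (x : Fin n → ℝ) : Prop := ∀ i, ∃ z : ℤ, x i = (z : ℝ)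

/-- A lattice polytope is the convex hull of a finite set of lattice points. -/
def IsLatticePolytope {n : ℕ} (P : Set (Fin n → ℝ)) : Prop :=
  ∃ V : Finset (Fin n → ℝ), (∀ v ∈ V, IsLatticePt v) ∧
    P = convexHull ℝ (↑V : Set (Fin n → ℝ))

/-- A rational polytope is the convex hull of a finite set of rational points. -/
def IsRatPolytope {n : ℕ} (P : Set (Fin n → ℝ)) : Prop :=
  ∃ V : Finset (Fin n → ℝ), (∀ v ∈ V, ∀ i, ∃ q : ℚ, v i = (q : ℝ)) ∧
    P = convexHull ℝ (↑V : Set (Fin n → ℝ))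

/-- The vertices `0, e_1, …, e_t` of the standard unimodular simplex `Δ_t ⊆ ℝ^t`. -/
def stdSimplexVert (t : ℕ) (k : Fin (t + 1)) : Fin t → ℝ :=
  fun j => if (k : ℕ) = (j : ℕ) + 1 then 1 else 0

/-- The standard unimodular simplex `Δ_t = conv(0, e_1, …, e_t) ⊆ ℝ^t`. -/
def unimodSimplex (t : ℕ) : Set (Fin t → ℝ) := convexHull ℝ (Set.range (stdSimplexVert t))

/-- The interior of the dilate `s • P` contains a lattice point. -/
def HasInteriorLatticePt {n : ℕ} (P : Set (Fin n → ℝ)) (s : ℕ) : Prop :=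
  ∃ x ∈ interior ((s : ℝ) • P), IsLatticePt x

/-- The codegree `cd(P)`: the least positive integer `t` such that the interior of `t • P`
contains a lattice point. -/
def codeg {n : ℕ} (P : Set (Fin n → ℝ)) : ℕ :=
  sInf {t : ℕ | 0 < t ∧ HasInteriorLatticePt P t}

/-- Pairing of an integer vector with a real vector. -/
def iprod {n : ℕ} (a : Fin n → ℤ) (x : Fin n → ℝ) : ℝ := ∑ i, (a i : ℝ) * x i

/-- An integer vector is primitive if it is nonzero and its coordinates have no common
non-unit divisor. -/
def IsPrimitive {n : ℕ} (a : Fin n → ℤ) : Prop :=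
  a ≠ 0 ∧ ∀ d : ℤ, (∀ i, d ∣ a i) → IsUnit d

/-- `(a, b)` is a facet inequality of `P ⊆ ℝ^n`: `a` is a primitive integer inner normal,
`b = min_{x ∈ P} ⟨a, x⟩`, and the corresponding face has dimension `n - 1`. -/
def IsFacetIneq {n : ℕ} (P : Set (Fin n → ℝ)) (a : Fin n → ℤ) (b : ℝ) : Prop :=
  IsPrimitive a ∧ (∀ x ∈ P, b ≤ iprod a x) ∧
  {x ∈ P | iprod a x = b}.Nonempty ∧
  Module.finrank ℝ ↥(vectorSpan ℝ {x ∈ P | iprod a x = b}) = n - 1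

/-- The adjoint polytope `P^(s) = {x : ⟨a_F, x⟩ ≥ b_F + s for all facets F}`. -/
def adjointPoly {n : ℕ} (P : Set (Fin n → ℝ)) (s : ℝ) : Set (Fin n → ℝ) :=
  {x | ∀ a b, IsFacetIneq P a b → b + s ≤ iprod a x}

/-- The set `{s > 0 : P^(s) ≠ ∅}`; the ℚ-codegree is `μ(P) = (sSup (muSet P))⁻¹`. -/
def muSet {n : ℕ} (P : Set (Fin n → ℝ)) : Set ℝ :=
  {s : ℝ | 0 < s ∧ (adjointPoly P s).Nonempty}

/-- `F` is a (nonempty, exposed) face of the polytope `P`; with `u = 0` this includes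
`P` itself. -/
def IsFace {n : ℕ} (P F : Set (Fin n → ℝ)) : Prop :=
  F.Nonempty ∧ ∃ (u : (Fin n → ℝ) →ₗ[ℝ] ℝ) (c : ℝ),
    (∀ x ∈ P, c ≤ u x) ∧ F = {x ∈ P | u x = c}

/-- The dimension of a face (or polytope): the rank of its direction vector space. -/
def fdim {n : ℕ} (F : Set (Fin n → ℝ)) : ℕ := Module.finrank ℝ ↥(vectorSpan ℝ F)

/-- `vol` is the relative lattice volume of `F`: the Lebesgue volume of the image of `F`
under an affine isomorphism of `aff F` with `ℝ^{dim F}` carrying `(aff F) ∩ ℤ^n` onto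
`ℤ^{dim F}`. -/
def HasRelVol {n : ℕ} (F : Set (Fin n → ℝ)) (vol : ℝ) : Prop :=
  ∃ T : (Fin n → ℝ) →ᵃ[ℝ] (Fin (fdim F) → ℝ),
    Set.BijOn T (affineSpan ℝ F : Set (Fin n → ℝ)) Set.univ ∧
    T '' ((affineSpan ℝ F : Set (Fin n → ℝ)) ∩ {x | IsLatticePt x}) = {y | IsLatticePt y} ∧
    vol = (volume (T '' F)).toReal

/-- The alternating face sum `Σ_F (-1)^{n - dim F} (dim F + 1)! Vol(F)`. -/
def faceSum {n : ℕ} (𝓕 : Finset (Set (Fin n → ℝ))) (volf : Set (Fin n → ℝ) → ℝ) : ℝ :=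
  ∑ F ∈ 𝓕, (-1 : ℝ) ^ (n - fdim F) * (Nat.factorial (fdim F + 1) : ℝ) * volf F

/-- The alternating sum over all nonempty faces of `P` of
`(-1)^{n - dim F} (dim F + 1)! Vol(F)` vanishes. -/
def FaceSumZero {n : ℕ} (P : Set (Fin n → ℝ)) : Prop :=
  ∃ (𝓕 : Finset (Set (Fin n → ℝ))) (volf : Set (Fin n → ℝ) → ℝ),
    (∀ F, F ∈ 𝓕 ↔ IsFace P F) ∧ (∀ F ∈ 𝓕, HasRelVol F (volf F)) ∧
    faceSum 𝓕 volf = 0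

/-- A polytope `R ⊆ ℝ^n` (of dimension `d = fdim R`) is smooth: at each vertex there are
exactly `d` edges, whose primitive integer direction vectors form a ℤ-basis of the
lattice `(vectorSpan R) ∩ ℤ^n`. -/
def IsSmoothPoly {n : ℕ} (R : Set (Fin n → ℝ)) : Prop :=
  ∀ v ∈ Set.extremePoints ℝ R,
    ∃ (w : Fin (fdim R) → (Fin n → ℤ)) (c : Fin (fdim R) → ℝ),
      (∀ i, 0 < c i) ∧ (∀ i, IsPrimitive (w i)) ∧
      LinearIndependent ℝ (fun i => ((fun j => ((w i j : ℝ))) : Fin n → ℝ)) ∧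
      (∀ i, ((fun j => ((w i j : ℝ))) : Fin n → ℝ) ∈ vectorSpan ℝ R) ∧
      (∀ z : Fin n → ℤ, ((fun j => (z j : ℝ)) : Fin n → ℝ) ∈ vectorSpan ℝ R →
        ∃ m : Fin (fdim R) → ℤ,
          ((fun j => (z j : ℝ)) : Fin n → ℝ) =
            ∑ i, (m i : ℝ) • ((fun j => ((w i j : ℝ))) : Fin n → ℝ)) ∧
      (∀ F : Set (Fin n → ℝ), (IsFace R F ∧ v ∈ F ∧ fdim F = 1) ↔
        ∃ i, F = segment ℝ v (v + c i • ((fun j => ((w i j : ℝ))) : Fin n → ℝ)))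

/-- The real-linear map `ℝ^n → ℝ^t` induced by an integer matrix. -/
def matMap {t n : ℕ} (A : Matrix (Fin t) (Fin n) ℤ) : (Fin n → ℝ) → (Fin t → ℝ) :=
  fun x k => ∑ j, (A k j : ℝ) * x j

/-- The piece `R_k = P ∩ π_ℝ^{-1}(v_k)` of a Cayley sum over the `k`-th vertex of `Δ_t`. -/
def cayleyPiece {t n : ℕ} (A : Matrix (Fin t) (Fin n) ℤ) (P : Set (Fin n → ℝ))
    (k : Fin (t + 1)) : Set (Fin n → ℝ) :=
  {x ∈ P | matMap A x = stdSimplexVert t k}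

/-- Two polytopes are normally equivalent (have the same normal fan): for all linear
functionals `u, v`, the minimizing face of `u` equals that of `v` on `R` precisely when the
same holds on `S`. -/
def NormEquiv {n : ℕ} (R S : Set (Fin n → ℝ)) : Prop :=
  ∀ u v : (Fin n → ℝ) →ₗ[ℝ] ℝ,
    ({x ∈ R | ∀ y ∈ R, u x ≤ u y} = {x ∈ R | ∀ y ∈ R, v x ≤ v y}) ↔
    ({x ∈ S | ∀ y ∈ S, u x ≤ u y} = {x ∈ S | ∀ y ∈ S, v x ≤ v y})

/-- `Q` is the Cayley sum, via the surjective lattice projection `A : ℤ^n → ℤ^t`, of the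
normally equivalent polytopes `R_k = Q ∩ π_ℝ^{-1}(v_k)`: `π_ℝ` maps `Q` onto `Δ_t`. -/
def IsCayleyWith {n t : ℕ} (Q : Set (Fin n → ℝ)) (A : Matrix (Fin t) (Fin n) ℤ) : Prop :=
  (∀ y : Fin t → ℤ, ∃ x : Fin n → ℤ, A.mulVec x = y) ∧
  matMap A '' Q = unimodSimplex t ∧
  ∀ k l : Fin (t + 1), NormEquiv (cayleyPiece A Q k) (cayleyPiece A Q l)

/-- The unimodular affine map `x ↦ Ux + w`. -/
def unimodMap {n : ℕ} (U : Matrix (Fin n) (Fin n) ℤ) (w : Fin n → ℤ) :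
    (Fin n → ℝ) → (Fin n → ℝ) :=
  fun x i => (∑ j, (U i j : ℝ) * x j) + (w i : ℝ)

/-- The set `{s > 0 : P^(s) has the same normal fan as P}`; the nef value is
`τ(P) = (sSup (tauSet P))⁻¹`. -/
def tauSet {n : ℕ} (P : Set (Fin n → ℝ)) : Set ℝ :=
  {s : ℝ | 0 < s ∧ NormEquiv (adjointPoly P s) P}

/-- A positive combination of the basis points with total weight `n` gives an interior point. -/
lemma aux_interior {n : ℕ} (hn : 0 < n) (P : Set (Fin n → ℝ)) (hconv : Convex ℝ P)
    (b : AffineBasis (Fin (n + 1)) ℝ (Fin n → ℝ)) (hb : ∀ i, b i ∈ P)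
    (m : Fin (n + 1) → ℝ) (hm : ∀ i, 0 < m i) (hs : ∑ i, m i = n)
    (hl : IsLatticePt (∑ i, m i • b i)) : HasInteriorLatticePt P n := by
  have hn' : (n : ℝ) ≠ 0 := by positivity
  refine ⟨_, ?_, hl⟩
  rw [interior_smul₀ hn']
  refine ⟨∑ i, ((n : ℝ)⁻¹ * m i) • b i, ?_, ?_⟩
  · have hsub : convexHull ℝ (Set.range b) ⊆ P :=
      convexHull_min (by rintro _ ⟨i, rfl⟩; exact hb i) hconv
    apply interior_mono hsub
    rw [b.interior_convexHull]
    intro i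
    have hw : ∑ i, ((n : ℝ)⁻¹ * m i) = 1 := by
      rw [← Finset.mul_sum, hs, inv_mul_cancel₀ hn']
    rw [← Finset.affineCombination_eq_linear_combination _ _ _ hw,
      b.coord_apply_combination_of_mem (Finset.mem_univ i) hw]
    have := hm i
    positivity
  · simp only [Finset.smul_sum, smul_smul, mul_inv_cancel_left₀ hn']

lemma aux_isLattice_sum {n : ℕ} {ι : Type*} (s : Finset ι) (z : ι → ℤ) (f : ι → Fin n → ℝ)
    (hf : ∀ i, IsLatticePt (f i)) : IsLatticePt (∑ i ∈ s, (z i : ℝ) • f i) := by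
  intro j
  choose g hg using fun i => hf i j
  refine ⟨∑ i ∈ s, z i * g i, ?_⟩
  simp [Finset.sum_apply, hg]

/-- Lattice points have integral barycentric coordinates. -/
lemma aux_integral {n : ℕ} (hn : 0 < n) (P : Set (Fin n → ℝ)) (hconv : Convex ℝ P)
    (b : AffineBasis (Fin (n + 1)) ℝ (Fin n → ℝ)) (hb : ∀ i, b i ∈ P)
    (hbl : ∀ i, IsLatticePt (b i)) (h : ¬ HasInteriorLatticePt P n)
    (x : Fin n → ℝ) (hx : IsLatticePt x) (i : Fin (n + 1)) :
    ∃ z : ℤ, b.coord i x = z := by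
  by_contra hcon
  apply h
  set c : Fin (n + 1) → ℝ := fun i => b.coord i x with hc
  have hc1 : ∑ i, c i = 1 := b.sum_coord_apply_eq_one x
  have hcx : ∑ i, c i • b i = x := b.linear_combination_coord_eq_self x
  set k : ℤ := 1 - ∑ i, (⌈c i⌉ - 1) with hk
  have hsum : ∑ i, (c i - ⌈c i⌉ + 1) = (k : ℝ) := by
    rw [hk]; push_cast
    simp only [Finset.sum_add_distrib, Finset.sum_sub_distrib, hc1]; ring
  have hlt : (k : ℝ) < ((n + 1 : ℕ) : ℝ) := by
    rw [← hsum]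
    have h2 : ∑ i : Fin (n + 1), (1 : ℝ) = ((n + 1 : ℕ) : ℝ) := by simp
    rw [← h2]
    refine Finset.sum_lt_sum (fun j _ => ?_) ⟨i, Finset.mem_univ _, ?_⟩
    · linarith [Int.le_ceil (c j)]
    · have h3 : c i ≠ ⌈c i⌉ := fun h4 => hcon ⟨_, h4⟩
      linarith [lt_of_le_of_ne (Int.le_ceil (c i)) h3]
  have hkn : k ≤ n := by
    have : k < ((n + 1 : ℕ) : ℤ) := by exact_mod_cast hlt
    push_cast at this; omega
  have hkn' : (k : ℝ) ≤ n := by exact_mod_cast hkn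
  set d : Fin (n + 1) → ℤ := fun j => 1 - ⌈c j⌉ + if j = 0 then (n - k) else 0 with hd
  have hmd : ∀ j, c j + d j = (c j - ⌈c j⌉ + 1) + if j = 0 then ((n : ℝ) - k) else 0 := by
    intro j; simp only [hd]; split_ifs <;> push_cast <;> ring
  refine aux_interior hn P hconv b hb (fun j => c j + d j) ?_ ?_ ?_
  · intro j
    simp only [hmd]
    have := Int.ceil_lt_add_one (c j)
    split_ifs <;> linarith
  · simp only [hmd]
    rw [Finset.sum_add_distrib, hsum]
    simp
  · simp only [add_smul, Finset.sum_add_distrib, hcx]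
    intro j
    obtain ⟨z, hz⟩ := hx j
    obtain ⟨y, hy⟩ := aux_isLattice_sum Finset.univ d b hbl j
    exact ⟨z + y, by rw [Pi.add_apply, hz, hy]; push_cast; rfl⟩

/-- No point of `P` lies outside the simplex. -/
lemma aux_coord_nonneg {n : ℕ} (hn : 0 < n) (P : Set (Fin n → ℝ)) (hconv : Convex ℝ P)
    (b : AffineBasis (Fin (n + 1)) ℝ (Fin n → ℝ)) (hb : ∀ i, b i ∈ P)
    (hbl : ∀ i, IsLatticePt (b i)) (h : ¬ HasInteriorLatticePt P n)
    (u : Fin n → ℝ) (hu : u ∈ P) (j : Fin (n + 1)) : 0 ≤ b.coord j u := by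
  by_contra! hneg
  apply h
  have hn' : (0 : ℝ) < n := by positivity
  set μ : Fin (n + 1) → ℝ := fun i => b.coord i u with hμ
  have hμ1 : ∑ i, μ i = 1 := b.sum_coord_apply_eq_one u
  have hμx : ∑ i, μ i • b i = u := b.linear_combination_coord_eq_self u
  -- choose ε
  obtain ⟨ε, hε0, hε1, hε⟩ : ∃ ε : ℝ, 0 < ε ∧ ε < 1 ∧ ∀ i, ε * μ i < (n : ℝ)⁻¹ := by
    set B : ℝ := 1 + ∑ i, |μ i| with hB
    have hB1 : 1 ≤ B := by
      have : 0 ≤ ∑ i, |μ i| := Finset.sum_nonneg fun i _ => abs_nonneg _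
      linarith
    have hμB : ∀ i, μ i < B := fun i => by
      have := Finset.single_le_sum (f := fun i => |μ i|) (fun i _ => abs_nonneg _)
        (Finset.mem_univ i)
      have h2 := le_abs_self (μ i)
      linarith
    have hni : (n : ℝ)⁻¹ ≤ 1 := inv_le_one_of_one_le₀ (by exact_mod_cast hn)
    refine ⟨(n : ℝ)⁻¹ * (2 * B)⁻¹, by positivity, ?_, fun i => ?_⟩
    · have : (2 * B)⁻¹ < 1 := inv_lt_one_of_one_lt₀ (by linarith)
      have h0 : 0 < (2 * B)⁻¹ := by positivity
      nlinarith
    · have h1 : (2 * B)⁻¹ * μ i < 1 := by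
        rw [inv_mul_lt_iff₀ (by positivity)]
        linarith [hμB i]
      have h0 : 0 < (n : ℝ)⁻¹ := by positivity
      rw [mul_assoc]
      nlinarith
  set p : Fin (n + 1) → ℝ := fun i => if i = j then 0 else 1 with hp
  have hps : ∑ i, p i = n := by
    simp [hp, Finset.sum_ite, Finset.filter_ne', Finset.card_erase_of_mem]
  have h1ε : 0 < 1 - ε := by linarith
  refine ⟨∑ i, p i • b i, ?_, ?_⟩
  · rw [interior_smul₀ hn'.ne']
    set q : Fin (n + 1) → ℝ := fun i => (1 - ε)⁻¹ * ((n : ℝ)⁻¹ * p i - ε * μ i) with hq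
    have hqs : ∑ i, q i = 1 := by
      rw [hq, ← Finset.mul_sum, Finset.sum_sub_distrib, ← Finset.mul_sum, ← Finset.mul_sum, hps,
        hμ1, inv_mul_cancel₀ hn'.ne', mul_one, inv_mul_cancel₀ h1ε.ne']
    have hsub : convexHull ℝ (Set.range b) ⊆ P :=
      convexHull_min (by rintro _ ⟨i, rfl⟩; exact hb i) hconv
    have hy : ∑ i, q i • b i ∈ interior P := by
      apply interior_mono hsub
      rw [b.interior_convexHull]
      intro i
      rw [← Finset.affineCombination_eq_linear_combination _ _ _ hqs,
        b.coord_apply_combination_of_mem (Finset.mem_univ i) hqs]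
      apply mul_pos (by positivity)
      by_cases hij : i = j
      · subst hij
        simp only [hp, if_true]
        have : ε * μ i < 0 := mul_neg_of_pos_of_neg hε0 hneg
        linarith
      · simp only [hp, if_neg hij]
        linarith [hε i]
    refine ⟨(1 - ε) • (∑ i, q i • b i) + ε • u, ?_, ?_⟩
    · exact hconv.combo_interior_self_mem_interior hy hu h1ε hε0.le (by ring)
    · rw [← hμx]
      simp only [Finset.smul_sum, ← Finset.sum_add_distrib, smul_smul, smul_add, ← add_smul]
      refine Finset.sum_congr rfl fun i _ => ?_
      congr 1
      simp only [hq]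
      field_simp
      ring
  · have := aux_isLattice_sum Finset.univ (fun i => if i = j then (0 : ℤ) else 1) b hbl
    convert this using 3 with i
    simp only [hp]; split_ifs <;> simp

lemma aux_basis {n : ℕ} (V : Finset (Fin n → ℝ))
    (hfull : affineSpan ℝ (V : Set (Fin n → ℝ)) = ⊤) :
    ∃ b : AffineBasis (Fin (n + 1)) ℝ (Fin n → ℝ), ∀ i, b i ∈ V := by
  obtain ⟨s, hs, b, hb⟩ := AffineBasis.exists_affine_subbasis hfull
  have hfin : s.Finite := V.finite_toSet.subset hs
  have : Fintype s := hfin.fintype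
  have hcard := b.card_eq_finrank_add_one
  rw [Module.finrank_fin_fun] at hcard
  refine ⟨b.reindex (Fintype.equivFinOfCardEq hcard), fun i => ?_⟩
  rw [AffineBasis.reindex_apply, hb]
  exact hs (Subtype.coe_prop _)

lemma aux_main {n : ℕ} (b : AffineBasis (Fin (n + 1)) ℝ (Fin n → ℝ))
    (hbl : ∀ i, IsLatticePt (b i))
    (hint : ∀ x, IsLatticePt x → ∀ i, ∃ z : ℤ, b.coord i x = z) :
    ∃ (U : Matrix (Fin n) (Fin n) ℤ) (w : Fin n → ℤ), IsUnit U.det ∧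
      (fun x i => (∑ j, (U i j : ℝ) * x j) + (w i : ℝ)) '' (convexHull ℝ (Set.range b))
        = unimodSimplex n := by
  have h0 : IsLatticePt (0 : Fin n → ℝ) := fun i => ⟨0, by simp⟩
  have h1 : ∀ j, IsLatticePt (Pi.single j 1 : Fin n → ℝ) := fun j i =>
    ⟨(Pi.single j 1 : Fin n → ℤ) i, by by_cases hij : i = j <;> simp [Pi.single_apply, hij]⟩
  choose w hw using fun i : Fin n => hint 0 h0 i.succ
  choose a ha using fun (i : Fin n) (j : Fin n) => hint _ (h1 j) i.succ
  choose B hB using hbl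
  set U : Matrix (Fin n) (Fin n) ℤ := fun i j => a i j - w i with hU
  have hlin : ∀ i j, (U i j : ℝ) = (b.coord i.succ).linear (Pi.single j 1) := by
    intro i j
    have := (b.coord i.succ).linearMap_vsub (Pi.single j 1) 0
    rw [vsub_eq_sub, sub_zero, ha, hw, vsub_eq_sub] at this
    rw [this, hU]; push_cast; rfl
  have hlin2 : ∀ i x, (∑ j, (U i j : ℝ) * x j) = (b.coord i.succ).linear x := by
    intro i x
    conv_rhs => rw [LinearMap.pi_apply_eq_sum_univ (b.coord i.succ).linear x]
    refine Finset.sum_congr rfl fun j _ => ?_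
    rw [hlin, smul_eq_mul, mul_comm]
    congr 2
    ext k
    simp [Pi.single_apply, eq_comm]
  have hT : ∀ i x, (∑ j, (U i j : ℝ) * x j) + (w i : ℝ) = b.coord i.succ x := by
    intro i x
    rw [hlin2, ← hw]
    have := (b.coord i.succ).map_vadd 0 x
    simp only [vadd_eq_add, add_zero] at this
    exact this.symm
  refine ⟨U, w, ?_, ?_⟩
  · set M : Matrix (Fin n) (Fin n) ℤ := fun j k => B k.succ j - B 0 j with hM
    have hUM : U * M = 1 := by
      ext i k
      have : (((U * M) i k : ℤ) : ℝ) = (((1 : Matrix (Fin n) (Fin n) ℤ) i k : ℤ) : ℝ) := by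
        rw [Matrix.mul_apply]
        push_cast
        have h3 : ∀ j, (M j k : ℝ) = (b k.succ - b 0) j := by
          intro j
          rw [hM, Pi.sub_apply, hB, hB]; push_cast; rfl
        simp only [h3]
        rw [hlin2, ← vsub_eq_sub, AffineMap.linearMap_vsub, b.coord_apply, b.coord_apply,
          Matrix.one_apply]
        by_cases hik : i = k <;> simp [hik]
      exact_mod_cast this
    exact (Matrix.isUnit_iff_isUnit_det U).1 (IsUnit.of_mul_eq_one M hUM)
  · set T : (Fin n → ℝ) →ᵃ[ℝ] (Fin n → ℝ) := AffineMap.pi fun i => b.coord i.succ with hTd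
    have : (fun (x : Fin n → ℝ) i => (∑ j, (U i j : ℝ) * x j) + (w i : ℝ)) = T := by
      ext x i
      simp only [hT]
      rfl
    rw [this, AffineMap.image_convexHull, unimodSimplex, ← Set.range_comp]
    congr 2
    ext k i
    change b.coord i.succ (b k) = _
    rw [b.coord_apply, stdSimplexVert]
    congr 1
    rw [Fin.ext_iff, Fin.val_succ]
    exact propext eq_comm

/-- A full-dimensional lattice polytope `P ⊆ ℝ^n` such that the interior of
`n • P` contains no lattice point (i.e. `cd(P) = n + 1`) is unimodularly equivalent to the
standard unimodular simplex `Δ_n`. -/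
theorem stmt2 {n : ℕ} (P : Set (Fin n → ℝ)) (hP : IsLatticePolytope P)
    (hfull : affineSpan ℝ P = ⊤) (h : ¬ HasInteriorLatticePt P n) :
    ∃ (U : Matrix (Fin n) (Fin n) ℤ) (w : Fin n → ℤ), IsUnit U.det ∧
      (fun x i => (∑ j, (U i j : ℝ) * x j) + (w i : ℝ)) '' P = unimodSimplex n := by
  rcases Nat.eq_zero_or_pos n with rfl | hn
  · exfalso
    apply h
    obtain ⟨x, hx⟩ : P.Nonempty := by
      rw [← affineSpan_nonempty ℝ, hfull]
      exact ⟨0, trivial⟩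
    have hP' : ((0 : ℕ) : ℝ) • P = Set.univ :=
      Subsingleton.eq_univ_of_nonempty ⟨_, Set.smul_mem_smul_set hx⟩
    refine ⟨0, ?_, fun i => i.elim0⟩
    rw [hP', interior_univ]
    trivial
  · obtain ⟨V, hV, rfl⟩ := hP
    rw [affineSpan_convexHull] at hfull
    obtain ⟨b, hb⟩ := aux_basis V hfull
    have hconv := convex_convexHull ℝ (V : Set (Fin n → ℝ))
    have hbP : ∀ i, b i ∈ convexHull ℝ (V : Set (Fin n → ℝ)) :=
      fun i => subset_convexHull ℝ _ (hb i)
    have hbl : ∀ i, IsLatticePt (b i) := fun i => hV _ (hb i)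
    have hEq : convexHull ℝ (V : Set (Fin n → ℝ)) = convexHull ℝ (Set.range b) := by
      apply Set.Subset.antisymm
      · intro u hu
        rw [b.convexHull_eq_nonneg_coord]
        exact fun j => aux_coord_nonneg hn _ hconv b hbP hbl h u hu j
      · exact convexHull_min (by rintro _ ⟨i, rfl⟩; exact hbP i) hconv
    obtain ⟨U, w, hU, hT⟩ := aux_main b hbl (aux_integral hn _ hconv b hbP hbl h)
    exact ⟨U, w, hU, by rw [hEq]; exact hT⟩
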